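/- For every Λ > 0 and every x > 0: the limit lim_{ε→0⁺} ρ_{ε,Λ}(x, x) exists, the two one-sided limits A₁ = lim_{(x′,y′)→(x,x), 0 ≤ x′ < y′} ρ̄_Λ(x′, y′) and A₂ = lim_{(x′,y′)→(x,x), 0 ≤ y′ < x′} ρ̄_Λ(x′, y′) exist, and lim_{ε→0⁺} ρ_{ε,Λ}(x, x) = (A₁ + A₂)/2. -/

import Mathlib

open MeasureTheory Topology Filter

/-- The one-dimensional heat kernel `h_t(u) = (4πt)^(−1/2) · exp(−u²/(4t))`. -/
noncomputable def heat (t u : ℝ) : ℝ :=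
  (Real.sqrt (4 * Real.pi * t))⁻¹ * Real.exp (-(u ^ 2) / (4 * t))

/-- The `u`-derivative of the heat kernel, `h_t′(u) = −(u/(2t)) · h_t(u)`. -/
noncomputable def heat' (t u : ℝ) : ℝ := -(u / (2 * t)) * heat t u

/-- `(φh_t)′(u) = φ′(u)·h_t(u) + φ(u)·h_t′(u)`. -/
noncomputable def phiHeat' (φ : ℝ → ℝ) (t u : ℝ) : ℝ :=
  deriv φ u * heat t u + φ u * heat' t u

/-- The scalar propagator kernel
`ρ_{ε,Λ}(x, y) = −(1/2) ∫_ε^Λ [(φh_t)′(x − y) + (φh_t)′(x + y)] dt`. -/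
noncomputable def rho (φ : ℝ → ℝ) (ε Λ x y : ℝ) : ℝ :=
  -(1 / 2) * ∫ t in ε..Λ, (phiHeat' φ t (x - y) + phiHeat' φ t (x + y))

/-- `ρ̄_Λ(x, y) = lim_{ε→0⁺} ρ_{ε,Λ}(x, y)` (whenever the limit exists). -/
noncomputable def rhoBar (φ : ℝ → ℝ) (Λ x y : ℝ) : ℝ :=
  limUnder (𝓝[>] (0 : ℝ)) (fun ε => rho φ ε Λ x y)

/-!
Since `∫₀^∞ h_t′(u) dt = -sign u / 2` (substitute `r = t^(-1/2)` to get a Gaussian integral),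
`∫₀^Λ (φh_t)′(u) dt = φ′(u) ∫₀^Λ h_t(u) dt - φ(u) (sign u / 2 + ∫_Λ^∞ h_t′(u) dt)`,
and the two integrals on the right are continuous in `u`. Hence, where `x + y > 0`, the kernel
`ρ̄_Λ(x, y)` is a continuous function plus `φ(x - y) sign(x - y) / 4`. On the diagonal the second
summand vanishes, while it tends to `∓φ(0) / 4` from the two sides.
-/

lemma div_abs_eq_sign (u : ℝ) : u / |u| = Real.sign u := by
  rcases lt_trichotomy u 0 with hu | rfl | hu
  · rw [abs_of_neg hu, Real.sign_of_neg hu, div_neg, div_self hu.ne]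
  · simp
  · rw [abs_of_pos hu, Real.sign_of_pos hu, div_self hu.ne']

lemma tendsto_intervalIntegral_nhdsGT_left {E : Type*} [NormedAddCommGroup E] [NormedSpace ℝ E]
    {f : ℝ → E} {a b : ℝ} (hab : a < b) (hf : IntervalIntegrable f volume a b) :
    Tendsto (fun c => ∫ t in c..b, f t) (𝓝[>] a) (𝓝 (∫ t in a..b, f t)) := by
  have hcont : ContinuousWithinAt (fun c => ∫ t in c..b, f t) (Set.uIcc a b) a :=
    intervalIntegral.continuousOn_primitive_interval_left
      ((intervalIntegrable_iff' (by simp)).1 hf) a Set.left_mem_uIcc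
  rw [← nhdsWithin_Ioc_eq_nhdsGT hab]
  exact hcont.tendsto.mono_left (nhdsWithin_mono a (Set.Ioc_subset_Icc_self.trans
    Set.Icc_subset_uIcc))

section HeatKernel

lemma heat_nonneg (t u : ℝ) : 0 ≤ heat t u := by
  unfold heat
  positivity

lemma heat_le_heat_zero (t u : ℝ) : heat t u ≤ heat t 0 := by
  unfold heat
  rcases le_or_gt t 0 with ht | ht
  · have hsqrt : √(4 * Real.pi * t) = 0 :=
      Real.sqrt_eq_zero_of_nonpos (mul_nonpos_of_nonneg_of_nonpos (by positivity) ht)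
    simp only [hsqrt, inv_zero, zero_mul, le_refl]
  · gcongr _ * Real.exp (?_ / _)
    simp [sq_nonneg]

lemma heat_zero_eq_rpow {t : ℝ} (ht : 0 ≤ t) :
    heat t 0 = (√(4 * Real.pi))⁻¹ * t ^ (-(1 / 2) : ℝ) := by
  rw [Real.rpow_neg ht, ← Real.sqrt_eq_rpow, ← mul_inv, ← Real.sqrt_mul (by positivity)]
  simp [heat]

lemma measurable_heat (u : ℝ) : Measurable (fun t => heat t u) := by
  unfold heat
  fun_prop

lemma continuous_heat (t : ℝ) : Continuous (heat t) := by
  unfold heat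
  fun_prop

lemma norm_mul_heat_le (w t u : ℝ) : ‖w * heat t u‖ ≤ ‖w * heat t 0‖ := by
  simp only [norm_mul, Real.norm_of_nonneg (heat_nonneg _ _)]
  gcongr
  exact heat_le_heat_zero t u

lemma continuous_integral_mul_heat {μ : Measure ℝ} {w : ℝ → ℝ} (hw : Measurable w)
    (hint : Integrable (fun t => w t * heat t 0) μ) :
    Continuous (fun u => ∫ t, w t * heat t u ∂μ) :=
  continuous_of_dominated
    (fun u => (hw.mul (measurable_heat u)).aestronglyMeasurable)
    (fun u => .of_forall fun t => norm_mul_heat_le (w t) t u) hint.norm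
    (.of_forall fun t => (continuous_heat t).const_mul (w t))

lemma integrableOn_heat_zero_Ioc (Λ : ℝ) :
    IntegrableOn (fun t => heat t 0) (Set.Ioc 0 Λ) := by
  rcases le_total Λ 0 with hΛ | hΛ
  · simp [Set.Ioc_eq_empty_of_le hΛ]
  have hrpow : IntegrableOn (fun t : ℝ => t ^ (-(1 / 2) : ℝ)) (Set.Ioc 0 Λ) :=
    (intervalIntegrable_iff_integrableOn_Ioc_of_le hΛ).1
      (intervalIntegral.intervalIntegrable_rpow' (by norm_num))
  exact IntegrableOn.congr_fun (hrpow.const_mul _)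
    (fun t ht => (heat_zero_eq_rpow ht.1.le).symm) measurableSet_Ioc

lemma integrableOn_inv_mul_heat_zero_Ioi {Λ : ℝ} (hΛ : 0 < Λ) :
    IntegrableOn (fun t => t⁻¹ * heat t 0) (Set.Ioi Λ) := by
  have hrpow : IntegrableOn (fun t : ℝ => t ^ (-(3 / 2) : ℝ)) (Set.Ioi Λ) :=
    integrableOn_Ioi_rpow_of_lt (by norm_num) hΛ
  refine IntegrableOn.congr_fun (hrpow.const_mul (√(4 * Real.pi))⁻¹) (fun t ht => ?_)
    measurableSet_Ioi
  have ht₀ : 0 < t := hΛ.trans ht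
  have hpow : t ^ (-(3 / 2) : ℝ) = t⁻¹ * t ^ (-(1 / 2) : ℝ) := by
    rw [← Real.rpow_neg_one, ← Real.rpow_add ht₀]
    norm_num
  simp only [hpow, heat_zero_eq_rpow ht₀.le]
  ring

lemma intervalIntegrable_heat {Λ : ℝ} (hΛ : 0 ≤ Λ) (u : ℝ) :
    IntervalIntegrable (fun t => heat t u) volume 0 Λ :=
  (intervalIntegrable_iff_integrableOn_Ioc_of_le hΛ).2 <|
    Integrable.mono (integrableOn_heat_zero_Ioc Λ) (measurable_heat u).aestronglyMeasurable
      (.of_forall fun t => by simpa using norm_mul_heat_le 1 t u)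

lemma continuous_intervalIntegral_heat {Λ : ℝ} (hΛ : 0 ≤ Λ) :
    Continuous (fun u => ∫ t in (0 : ℝ)..Λ, heat t u) := by
  simpa only [intervalIntegral.integral_of_le hΛ, one_mul] using
    continuous_integral_mul_heat (w := fun _ => 1) measurable_const
      (by simpa only [one_mul, IntegrableOn] using integrableOn_heat_zero_Ioc Λ)

lemma continuous_integral_Ioi_heat' {Λ : ℝ} (hΛ : 0 < Λ) :
    Continuous (fun u => ∫ t in Set.Ioi Λ, heat' t u) := by
  have hfactor (t u : ℝ) : heat' t u = -(u / 2) * (t⁻¹ * heat t u) := by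
    unfold heat'
    ring
  simp only [hfactor, integral_const_mul]
  have := continuous_integral_mul_heat measurable_inv (integrableOn_inv_mul_heat_zero_Ioi hΛ)
  fun_prop

lemma heat'_eq_rpow_smul_gaussian {t : ℝ} (ht : 0 < t) (u : ℝ) :
    heat' t u = -(u / (2 * √Real.pi)) *
      ((|(-(1 / 2) : ℝ)| * t ^ (-(1 / 2) - 1 : ℝ)) •
        Real.exp (-(u ^ 2 / 4) * (t ^ (-(1 / 2) : ℝ)) ^ 2)) := by
  have hpow : t ^ (-(1 / 2) - 1 : ℝ) = (√t)⁻¹ * t⁻¹ := by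
    rw [Real.rpow_sub_one ht.ne', Real.rpow_neg ht.le, ← Real.sqrt_eq_rpow, div_eq_mul_inv]
  have hsq : (t ^ (-(1 / 2) : ℝ)) ^ 2 = t⁻¹ := by
    rw [Real.rpow_neg ht.le, ← Real.sqrt_eq_rpow, inv_pow, Real.sq_sqrt ht.le]
  have hsqrt : √(4 * Real.pi * t) = 2 * √Real.pi * √t := by
    rw [Real.sqrt_mul (by positivity), Real.sqrt_mul (by positivity),
      show (4 : ℝ) = 2 ^ 2 by norm_num, Real.sqrt_sq (by positivity)]
  have hexp : -(u ^ 2) / (4 * t) = -(u ^ 2 / 4) * t⁻¹ := by ring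
  have habs : |(-(1 / 2) : ℝ)| = 1 / 2 := by norm_num
  rw [heat', heat, hpow, hsq, hsqrt, hexp, habs, smul_eq_mul]
  ring

lemma integrableOn_heat'_Ioi (u : ℝ) : IntegrableOn (fun t => heat' t u) (Set.Ioi 0) := by
  rcases eq_or_ne u 0 with rfl | hu
  · simp [heat']
  have hgauss : IntegrableOn (fun r : ℝ => Real.exp (-(u ^ 2 / 4) * r ^ 2)) (Set.Ioi 0) :=
    (integrable_exp_neg_mul_sq (by positivity)).integrableOn
  have hsubst := (integrableOn_Ioi_comp_rpow_iff _ (p := -(1 / 2)) (by norm_num)).2 hgauss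
  exact IntegrableOn.congr_fun (hsubst.const_mul _)
    (fun t ht => (heat'_eq_rpow_smul_gaussian ht u).symm) measurableSet_Ioi

lemma integral_Ioi_heat' (u : ℝ) : ∫ t in Set.Ioi 0, heat' t u = -(Real.sign u / 2) := by
  have hsqrt : √(Real.pi / (u ^ 2 / 4)) = 2 * √Real.pi / |u| := by
    rw [show Real.pi / (u ^ 2 / 4) = 2 ^ 2 * Real.pi / u ^ 2 by ring,
      Real.sqrt_div (by positivity), Real.sqrt_mul (by positivity), Real.sqrt_sq (by positivity),
      Real.sqrt_sq_eq_abs]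
  have hpi : √Real.pi ≠ 0 := by positivity
  calc ∫ t in Set.Ioi 0, heat' t u
      = -(u / (2 * √Real.pi)) * ∫ r in Set.Ioi 0, Real.exp (-(u ^ 2 / 4) * r ^ 2) := by
        rw [setIntegral_congr_fun measurableSet_Ioi
            fun t ht => heat'_eq_rpow_smul_gaussian ht u, integral_const_mul,
          integral_comp_rpow_Ioi (fun r => Real.exp (-(u ^ 2 / 4) * r ^ 2)) (by norm_num)]
    _ = -(u / |u| / 2) := by
        rw [integral_gaussian_Ioi, hsqrt]
        field_simp
    _ = -(Real.sign u / 2) := by rw [div_abs_eq_sign]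

lemma integral_heat' {Λ : ℝ} (hΛ : 0 ≤ Λ) (u : ℝ) :
    ∫ t in (0 : ℝ)..Λ, heat' t u = -(Real.sign u / 2) - ∫ t in Set.Ioi Λ, heat' t u := by
  rw [← integral_Ioi_heat', intervalIntegral.integral_Ioi_sub_Ioi (integrableOn_heat'_Ioi u) hΛ]

lemma intervalIntegrable_heat' {Λ : ℝ} (hΛ : 0 ≤ Λ) (u : ℝ) :
    IntervalIntegrable (fun t => heat' t u) volume 0 Λ :=
  (intervalIntegrable_iff_integrableOn_Ioc_of_le hΛ).2
    ((integrableOn_heat'_Ioi u).mono_set Set.Ioc_subset_Ioi_self)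

end HeatKernel

section Propagator

variable (φ : ℝ → ℝ) {Λ : ℝ}

/-- The part of `∫₀^Λ (φh_t)′(u) dt` that is continuous in `u`: what remains after removing the
jump `-φ(u) sign u / 2` at the origin. -/
noncomputable def phiHeatRegular (φ : ℝ → ℝ) (Λ u : ℝ) : ℝ :=
  deriv φ u * (∫ t in (0 : ℝ)..Λ, heat t u) - φ u * ∫ t in Set.Ioi Λ, heat' t u

/-- The part of `ρ̄_Λ(x, y)` that extends continuously across the diagonal. The choice
`sign (x + y) = 1` is built in, so it is meant for `x + y > 0`. -/
noncomputable def rhoRegular (φ : ℝ → ℝ) (Λ x y : ℝ) : ℝ :=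
  -(1 / 2) * (phiHeatRegular φ Λ (x - y) + phiHeatRegular φ Λ (x + y) - φ (x + y) / 2)

lemma intervalIntegrable_phiHeat' (hΛ : 0 ≤ Λ) (u : ℝ) :
    IntervalIntegrable (fun t => phiHeat' φ t u) volume 0 Λ :=
  ((intervalIntegrable_heat hΛ u).const_mul _).add ((intervalIntegrable_heat' hΛ u).const_mul _)

lemma integral_phiHeat' (hΛ : 0 ≤ Λ) (u : ℝ) :
    ∫ t in (0 : ℝ)..Λ, phiHeat' φ t u = phiHeatRegular φ Λ u - φ u * Real.sign u / 2 := by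
  simp only [phiHeat', phiHeatRegular]
  rw [intervalIntegral.integral_add ((intervalIntegrable_heat hΛ u).const_mul _)
      ((intervalIntegrable_heat' hΛ u).const_mul _), intervalIntegral.integral_const_mul,
    intervalIntegral.integral_const_mul, integral_heat' hΛ]
  ring

lemma tendsto_rho (hΛ : 0 < Λ) {x y : ℝ} (hxy : 0 < x + y) :
    Tendsto (fun ε => rho φ ε Λ x y) (𝓝[>] 0)
      (𝓝 (rhoRegular φ Λ x y + φ (x - y) * Real.sign (x - y) / 4)) := by
  have hsub := intervalIntegrable_phiHeat' φ hΛ.le (x - y)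
  have hadd := intervalIntegrable_phiHeat' φ hΛ.le (x + y)
  have hvalue : rhoRegular φ Λ x y + φ (x - y) * Real.sign (x - y) / 4 =
      -(1 / 2) * ∫ t in (0 : ℝ)..Λ, (phiHeat' φ t (x - y) + phiHeat' φ t (x + y)) := by
    rw [intervalIntegral.integral_add hsub hadd, integral_phiHeat' φ hΛ.le,
      integral_phiHeat' φ hΛ.le, Real.sign_of_pos hxy, rhoRegular]
    ring
  rw [hvalue]
  exact (tendsto_intervalIntegral_nhdsGT_left hΛ (hsub.add hadd)).const_mul _

lemma rhoBar_eq (hΛ : 0 < Λ) {x y : ℝ} (hxy : 0 < x + y) :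
    rhoBar φ Λ x y = rhoRegular φ Λ x y + φ (x - y) * Real.sign (x - y) / 4 :=
  (tendsto_rho φ hΛ hxy).limUnder_eq

lemma rhoBar_self (hΛ : 0 < Λ) {x : ℝ} (hx : 0 < x) :
    rhoBar φ Λ x x = rhoRegular φ Λ x x := by
  simp [rhoBar_eq φ hΛ (add_pos hx hx)]

variable {φ}

lemma continuous_phiHeatRegular (hφ : ContDiff ℝ 1 φ) (hΛ : 0 < Λ) :
    Continuous (phiHeatRegular φ Λ) :=
  ((hφ.continuous_deriv le_rfl).mul (continuous_intervalIntegral_heat hΛ.le)).sub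
    (hφ.continuous.mul (continuous_integral_Ioi_heat' hΛ))

lemma continuous_rhoRegular (hφ : ContDiff ℝ 1 φ) (hΛ : 0 < Λ) :
    Continuous (fun p : ℝ × ℝ => rhoRegular φ Λ p.1 p.2) := by
  have := continuous_phiHeatRegular hφ hΛ
  have := hφ.continuous
  unfold rhoRegular
  fun_prop

lemma tendsto_rhoBar_nhdsWithin_of_sign_eq (hφ : ContDiff ℝ 1 φ) (hΛ : 0 < Λ) {x : ℝ} (hx : 0 < x)
    {S : Set (ℝ × ℝ)} {σ : ℝ} (hS : ∀ p ∈ S, Real.sign (p.1 - p.2) = σ) :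
    Tendsto (fun p : ℝ × ℝ => rhoBar φ Λ p.1 p.2) (𝓝[S] (x, x))
      (𝓝 (rhoBar φ Λ x x + φ 0 * σ / 4)) := by
  have hcont : Continuous fun p : ℝ × ℝ => rhoRegular φ Λ p.1 p.2 + φ (p.1 - p.2) * σ / 4 := by
    have := continuous_rhoRegular hφ hΛ
    have := hφ.continuous
    fun_prop
  have hlim := (hcont.tendsto (x, x)).mono_left (nhdsWithin_le_nhds (s := S))
  simp only [sub_self, ← rhoBar_self φ hΛ hx] at hlim
  have hpos : ∀ᶠ p : ℝ × ℝ in 𝓝[S] (x, x), 0 < p.1 + p.2 :=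
    nhdsWithin_le_nhds <| (continuous_fst.add continuous_snd).continuousAt.eventually_const_lt
      (add_pos hx hx)
  refine hlim.congr' ?_
  filter_upwards [self_mem_nhdsWithin, hpos] with p hpS hp
  rw [rhoBar_eq φ hΛ hp, hS p hpS]

theorem stmt9_general (hφ : ContDiff ℝ 1 φ) (hΛ : 0 < Λ) {x : ℝ} (hx : 0 < x) :
    Tendsto (fun p : ℝ × ℝ => rhoBar φ Λ p.1 p.2) (𝓝[{p | p.1 < p.2}] (x, x))
      (𝓝 (rhoBar φ Λ x x - φ 0 / 4)) ∧
    Tendsto (fun p : ℝ × ℝ => rhoBar φ Λ p.1 p.2) (𝓝[{p | p.2 < p.1}] (x, x))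
      (𝓝 (rhoBar φ Λ x x + φ 0 / 4)) ∧
    Tendsto (fun ε => rho φ ε Λ x x) (𝓝[>] 0) (𝓝 (rhoBar φ Λ x x)) := by
  refine ⟨?_, ?_, tendsto_nhds_limUnder ⟨_, tendsto_rho φ hΛ (add_pos hx hx)⟩⟩
  · simpa [neg_div, ← sub_eq_add_neg] using tendsto_rhoBar_nhdsWithin_of_sign_eq hφ hΛ hx
      (S := {p | p.1 < p.2}) fun p hp => Real.sign_of_neg (sub_neg.2 hp)
  · simpa using tendsto_rhoBar_nhdsWithin_of_sign_eq hφ hΛ hx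
      (S := {p | p.2 < p.1}) fun p hp => Real.sign_of_pos (sub_pos.2 hp)

end Propagator

/-- For `Λ > 0` and `x > 0`: the limit `lim_{ε→0⁺} ρ_{ε,Λ}(x, x)` exists, the two
one-sided limits `A₁, A₂` of `ρ̄_Λ` at `(x, x)` from the sectors `{0 ≤ x′ < y′}` and
`{0 ≤ y′ < x′}` exist, and `lim_{ε→0⁺} ρ_{ε,Λ}(x, x) = (A₁ + A₂)/2`. -/
theorem stmt9 (φ : ℝ → ℝ) (hφ : ContDiff ℝ (⊤ : ℕ∞) φ) (hsupp : HasCompactSupport φ)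
    (heven : ∀ x, φ (-x) = φ x) (δ : ℝ) (hδ : 0 < δ) (hone : ∀ x, |x| < δ → φ x = 1)
    (Λ : ℝ) (hΛ : 0 < Λ) (x : ℝ) (hx : 0 < x) :
    ∃ A₁ A₂ : ℝ,
      Tendsto (fun p : ℝ × ℝ => rhoBar φ Λ p.1 p.2)
        (𝓝[{p : ℝ × ℝ | 0 ≤ p.1 ∧ p.1 < p.2}] (x, x)) (𝓝 A₁) ∧
      Tendsto (fun p : ℝ × ℝ => rhoBar φ Λ p.1 p.2)
        (𝓝[{p : ℝ × ℝ | 0 ≤ p.2 ∧ p.2 < p.1}] (x, x)) (𝓝 A₂) ∧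
      Tendsto (fun ε => rho φ ε Λ x x) (𝓝[>] (0 : ℝ)) (𝓝 ((A₁ + A₂) / 2)) := by
  obtain ⟨hbelow, habove, hdiag⟩ := stmt9_general (hφ.of_le (by simp)) hΛ hx
  exact ⟨_, _, hbelow.mono_left (nhdsWithin_mono _ fun _ => And.right),
    habove.mono_left (nhdsWithin_mono _ fun _ => And.right), by convert hdiag using 2; ring⟩
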